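/- Let V : ℝ^d → ℝ be differentiable with L-Lipschitz gradient (L-smooth), let μ > 0, and define the smoothed function V_μ(θ) = E_{v' ∼ Unif(B^d)} [V(θ + μ v')], where Unif(B^d) is the uniform probability measure on the closed unit Euclidean ball of ℝ^d. Then V_μ is differentiable with L-Lipschitz gradient, and for every θ ∈ ℝ^d, ∇V_μ(θ) = E_{v ∼ Unif(S^{d−1})} [ (d/μ)·(V(θ + μ v) − V(θ))·v ], where Unif(S^{d−1}) is the uniform probability measure on the unit Euclidean sphere of ℝ^d. -/

import Mathlib

open MeasureTheory

noncomputable section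

/-- The uniform probability measure on the closed unit Euclidean ball of `ℝ^d`. -/
def ballUniform (d : ℕ) : Measure (EuclideanSpace ℝ (Fin d)) :=
  (volume (Metric.closedBall (0 : EuclideanSpace ℝ (Fin d)) 1))⁻¹ •
    volume.restrict (Metric.closedBall (0 : EuclideanSpace ℝ (Fin d)) 1)

/-- The uniform probability measure on the unit Euclidean sphere of `ℝ^d`,
viewed as a measure on `ℝ^d` (the normalized surface measure). -/
def sphereUniform (d : ℕ) : Measure (EuclideanSpace ℝ (Fin d)) :=
  ((volume : Measure (EuclideanSpace ℝ (Fin d))).toSphere Set.univ)⁻¹ •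
    Measure.map Subtype.val (volume : Measure (EuclideanSpace ℝ (Fin d))).toSphere

/-- The randomized smoothing `V_μ(θ) = E_{v' ∼ Unif(B^d)}[V(θ + μ v')]` of `V`. -/
def smoothed (d : ℕ) (V : EuclideanSpace ℝ (Fin d) → ℝ) (μ : ℝ)
    (θ : EuclideanSpace ℝ (Fin d)) : ℝ :=
  ∫ v, V (θ + μ • v) ∂(ballUniform d)


theorem oneD (a b : ℝ → ℝ) (ha : Continuous a) (hb : Continuous b)
    (H : ∀ R : ℝ, 0 < R → ∫ r in (0:ℝ)..R, (R^2 - r^2)^2 * a r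
      = 4 * ∫ r in (0:ℝ)..R, (R^2 - r^2) * (r * b r)) (R : ℝ) (hR : 0 < R) :
    ∫ r in (0:ℝ)..R, a r = b R := by
  have prim : ∀ (c : ℝ → ℝ), Continuous c → ∀ R : ℝ,
      HasDerivAt (fun R => ∫ r in (0:ℝ)..R, c r) (c R) R := fun c hc R =>
    hc.integral_hasStrictDerivAt 0 R |>.hasDerivAt
  have h2 : Continuous (fun r => r^2 * a r) := by fun_prop
  have h4 : Continuous (fun r => r^4 * a r) := by fun_prop
  have k1 : Continuous (fun r => r * b r) := by fun_prop
  have k3 : Continuous (fun r => r^3 * b r) := by fun_prop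
  have H1 : ∀ R : ℝ, 0 < R → R^4 * (∫ r in (0:ℝ)..R, a r) - 2 * R^2 * (∫ r in (0:ℝ)..R, r^2 * a r)
      + (∫ r in (0:ℝ)..R, r^4 * a r)
      = 4 * (R^2 * (∫ r in (0:ℝ)..R, r * b r) - ∫ r in (0:ℝ)..R, r^3 * b r) := by
    intro R hR
    have := H R hR
    rw [← intervalIntegral.integral_const_mul, ← intervalIntegral.integral_const_mul,
      ← intervalIntegral.integral_const_mul, ← intervalIntegral.integral_sub,
      ← intervalIntegral.integral_sub, ← intervalIntegral.integral_add]
    · refine Eq.trans ?_ (this.trans ?_)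
      · congr 1; ext r; ring
      · congr 2; ext r; ring
    all_goals exact Continuous.intervalIntegrable (by fun_prop) _ _
  have H2 : ∀ R : ℝ, 0 < R → R^2 * (∫ r in (0:ℝ)..R, a r) - (∫ r in (0:ℝ)..R, r^2 * a r)
      = 2 * (∫ r in (0:ℝ)..R, r * b r) := by
    intro R hR
    have d1 := ((((hasDerivAt_pow 4 R).mul (prim a ha R)).sub
      (((hasDerivAt_pow 2 R).const_mul 2).mul (prim _ h2 R))).add (prim _ h4 R))
    have d2 := ((((hasDerivAt_pow 2 R).mul (prim _ k1 R)).sub (prim _ k3 R)).const_mul 4)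
    have e := d1.unique (d2.congr_of_eventuallyEq ?_)
    · simp at e
      apply mul_left_cancel₀ (show 4 * R ≠ 0 by positivity)
      linear_combination e
    · filter_upwards [lt_mem_nhds hR] with x hx using H1 x hx
  have d1 := ((hasDerivAt_pow 2 R).mul (prim a ha R)).sub (prim _ h2 R)
  have d2 := (prim _ k1 R).const_mul 2
  have e := d1.unique (d2.congr_of_eventuallyEq ?_)
  · simp at e
    apply mul_left_cancel₀ (show 2 * R ≠ 0 by positivity)
    linear_combination e
  · filter_upwards [lt_mem_nhds hR] with x hx using H2 x hx

theorem hasDerivAt_max_sq (s : ℝ) : HasDerivAt (fun t : ℝ => (max 0 t)^2) (2 * max 0 s) s := by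
  rcases lt_trichotomy s 0 with h | h | h
  · rw [max_eq_left h.le]
    refine ((hasDerivAt_const s (0:ℝ)).congr_of_eventuallyEq ?_).congr_deriv (by simp)
    filter_upwards [gt_mem_nhds h] with x hx
    simp [max_eq_left hx.le]
  · subst h
    rw [hasDerivAt_iff_isLittleO]
    simp only [max_self, sub_zero, mul_zero, smul_zero, ne_eq, OfNat.ofNat_ne_zero, not_false_eq_true, zero_pow]
    refine Asymptotics.IsBigO.trans_isLittleO (g := fun x : ℝ => x^2) ?_ ?_
    · refine Asymptotics.IsBigO.of_bound 1 (Filter.Eventually.of_forall fun x => ?_)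
      rw [one_mul, norm_pow, norm_pow]
      gcongr
      simp only [Real.norm_eq_abs]
      rw [abs_of_nonneg (le_max_left _ _)]
      exact max_le (abs_nonneg _) (le_abs_self _)
    · simpa using Asymptotics.isLittleO_pow_pow (𝕜 := ℝ) (m := 1) (n := 2) (by norm_num)
  · rw [max_eq_right h.le]
    refine ((hasDerivAt_pow 2 s).congr_of_eventuallyEq ?_).congr_deriv (by simp)
    filter_upwards [lt_mem_nhds h] with x hx
    simp [max_eq_right (le_of_lt hx)]

section AuxE
variable {E : Type*} [NormedAddCommGroup E] [InnerProductSpace ℝ E] [FiniteDimensional ℝ E]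
  [MeasurableSpace E] [BorelSpace E] [Nontrivial E]

theorem polar (h : E → ℝ) (hh : Continuous h) (R : ℝ) (hR : 0 < R) :
    ∫ x in Metric.ball (0:E) R, h x =
      ∫ r in (0:ℝ)..R, r ^ (Module.finrank ℝ E - 1) *
        ∫ w : Metric.sphere (0:E) 1, h (r • (w:E)) ∂(volume : Measure E).toSphere := by
  set μ : Measure E := volume
  set g : E → ℝ := (Metric.ball (0:E) R).indicator h
  have hgi : Integrable g μ := by
    rw [integrable_indicator_iff Metric.isOpen_ball.measurableSet]
    exact (hh.continuousOn.integrableOn_compact (isCompact_closedBall 0 R)).mono_set Metric.ball_subset_closedBall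
  have mp := μ.measurePreserving_homeomorphUnitSphereProd
  let G : Metric.sphere (0:E) 1 × Set.Ioi (0:ℝ) → ℝ := fun p => g (p.2.1 • p.1.1)
  have hG : (fun x : ({0}ᶜ : Set E) => g x) = G ∘ homeomorphUnitSphereProd E := by
    ext x
    have hx : ‖(x:E)‖ ≠ 0 := norm_ne_zero_iff.2 x.2
    simp [G, smul_smul, hx]
  have hGi : Integrable G (μ.toSphere.prod (.volumeIoiPow (Module.finrank ℝ E - 1))) := by
    rw [← mp.integrable_comp_emb (Homeomorph.measurableEmbedding _), ← hG]
    have : IntegrableOn g ({0}ᶜ) μ := hgi.integrableOn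
    rwa [integrableOn_iff_comap_subtypeVal (measurableSet_singleton _).compl] at this
  calc ∫ x in Metric.ball (0:E) R, h x = ∫ x, g x ∂μ := by
        rw [integral_indicator Metric.isOpen_ball.measurableSet]
    _ = ∫ x : ({(0)}ᶜ : Set E), g x.1 ∂(μ.comap (↑)) := by
      rw [integral_subtype_comap (measurableSet_singleton _).compl fun x ↦ g x,
        restrict_compl_singleton]
    _ = ∫ x, G x ∂μ.toSphere.prod (.volumeIoiPow (Module.finrank ℝ E - 1)) := by
      rw [hG]
      exact mp.integral_comp (Homeomorph.measurableEmbedding _) G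
    _ = ∫ r, (∫ w, G (w, r) ∂μ.toSphere) ∂(.volumeIoiPow (Module.finrank ℝ E - 1)) :=
      integral_prod_symm _ hGi
    _ = ∫ r in Set.Ioi (0:ℝ), r ^ (Module.finrank ℝ E - 1) * ∫ w : Metric.sphere (0:E) 1, g (r • (w:E)) ∂μ.toSphere := by
      simp only [Measure.volumeIoiPow, ENNReal.ofReal]
      rw [integral_withDensity_eq_integral_smul]
      · rw [integral_subtype_comap measurableSet_Ioi fun a ↦ Real.toNNReal (a ^ (Module.finrank ℝ E - 1)) • ∫ w : Metric.sphere (0:E) 1, g (a • (w:E)) ∂μ.toSphere,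
        setIntegral_congr_fun measurableSet_Ioi fun x hx ↦ ?_]
        simp only [NNReal.smul_def, Real.coe_toNNReal _ (pow_nonneg hx.out.le _), smul_eq_mul]
      · exact (measurable_subtype_coe.pow_const _).real_toNNReal
    _ = ∫ r in Set.Ioi (0:ℝ), (Set.Iio R).indicator (fun r => r ^ (Module.finrank ℝ E - 1) * ∫ w : Metric.sphere (0:E) 1, h (r • (w:E)) ∂μ.toSphere) r := by
      refine setIntegral_congr_fun measurableSet_Ioi fun r hr => ?_
      have hr' : 0 < r := hr
      have hn : ∀ w : Metric.sphere (0:E) 1, ‖r • (w:E)‖ = r := fun w => by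
        simp [norm_smul, abs_of_pos hr']
      by_cases hrR : r < R
      · simp [g, Set.indicator, hrR, hn]
      · simp [g, Set.indicator, hrR, hn]
    _ = _ := by
      rw [setIntegral_indicator measurableSet_Iio, Set.Ioi_inter_Iio, intervalIntegral.integral_of_le hR.le, integral_Ioc_eq_integral_Ioo]

theorem ibp (f : E → ℝ) (hf : ContDiff ℝ 1 f) (e : E) (R : ℝ) (hR : 0 < R) :
    ∫ x in Metric.ball (0:E) R, (R^2 - ‖x‖^2)^2 * fderiv ℝ f x e =
     4 * ∫ x in Metric.ball (0:E) R, (R^2 - ‖x‖^2) * (f x * inner ℝ x e) := by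
  have hfc : Continuous f := hf.continuous
  have hf'c : Continuous (fun x => fderiv ℝ f x e) :=
    (hf.continuous_fderiv one_ne_zero).clm_apply continuous_const
  set ψ : E → ℝ := fun x => max 0 (R^2 - ‖x‖^2) with hψ
  have ψc : Continuous ψ := by fun_prop
  have ψ0 : ∀ x, x ∉ Metric.ball (0:E) R → ψ x = 0 := by
    intro x hx
    rw [Metric.mem_ball, dist_zero_right, not_lt] at hx
    exact max_eq_left (by nlinarith)
  have ψ1 : ∀ x, x ∈ Metric.ball (0:E) R → ψ x = R^2 - ‖x‖^2 := by
    intro x hx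
    rw [Metric.mem_ball, dist_zero_right] at hx
    exact max_eq_right (by nlinarith [norm_nonneg x])
  have hd : ∀ x, HasFDerivAt (fun x => ψ x ^ 2) ((2 * ψ x) • (-((2:ℝ) • innerSL ℝ x))) x := by
    intro x
    have h1 : HasFDerivAt (fun x : E => R^2 - ‖x‖^2) (-((2:ℝ) • innerSL ℝ x)) x := by
      have := ((hasStrictFDerivAt_norm_sq x).hasFDerivAt).const_sub (R^2)
      refine this.congr_fderiv ?_
      ext y; simp
    exact (hasDerivAt_max_sq (R^2 - ‖x‖^2)).comp_hasFDerivAt x h1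
  have hfd : ∀ x, fderiv ℝ (fun x => ψ x ^ 2) x e = -(4 * (ψ x * inner ℝ x e)) := by
    intro x
    rw [(hd x).fderiv]
    simp
    ring
  have int : ∀ g : E → ℝ, Continuous g → Integrable (fun x => ψ x * g x) := by
    intro g hg
    refine (ψc.mul hg).integrable_of_hasCompactSupport ?_
    refine HasCompactSupport.intro (isCompact_closedBall (0:E) R) fun x hx => ?_
    simp [ψ0 x fun h => hx (Metric.ball_subset_closedBall h)]
  have key := integral_mul_fderiv_eq_neg_fderiv_mul_of_integrable (μ := (volume : Measure E))
    (f := fun x => ψ x ^ 2) (g := f) (v := e) ?_ ?_ ?_ (fun x _ => (hd x).differentiableAt)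
    (fun x _ => (hf.differentiable one_ne_zero) x)
  · calc _ = ∫ x in Metric.ball (0:E) R, ψ x ^ 2 * fderiv ℝ f x e := by
          refine setIntegral_congr_fun measurableSet_ball fun x hx => ?_
          simp only [ψ1 x hx]
      _ = ∫ x, ψ x ^ 2 * fderiv ℝ f x e := by
          refine setIntegral_eq_integral_of_forall_compl_eq_zero fun x hx => ?_
          simp [ψ0 x hx]
      _ = ∫ x, 4 * (ψ x * (f x * inner ℝ x e)) := by
          rw [key, ← integral_neg]
          congr 1; ext x
          rw [hfd]; ring
      _ = 4 * ∫ x, ψ x * (f x * inner ℝ x e) := integral_const_mul _ _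
      _ = 4 * ∫ x in Metric.ball (0:E) R, ψ x * (f x * inner ℝ x e) := by
          congr 1; symm
          refine setIntegral_eq_integral_of_forall_compl_eq_zero fun x hx => ?_
          simp [ψ0 x hx]
      _ = _ := by
          congr 1
          refine setIntegral_congr_fun measurableSet_ball fun x hx => ?_
          simp only [ψ1 x hx]
  · refine (int (fun x => -4 * inner ℝ x e * f x) (by fun_prop)).congr (.of_forall fun x => ?_)
    simp only [hfd]; ring
  · refine (int (fun x => ψ x * fderiv ℝ f x e) (by fun_prop)).congr (.of_forall fun x => ?_)
    simp only; ring
  · refine (int (fun x => ψ x * f x) (by fun_prop)).congr (.of_forall fun x => ?_)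
    simp only; ring

theorem sphere_cont (h : E → ℝ) (hh : Continuous h) : Continuous (fun r : ℝ =>
    ∫ w : Metric.sphere (0:E) 1, h (r • (w:E)) ∂(volume : Measure E).toSphere) := by
  have : CompactSpace (Metric.sphere (0:E) 1) := isCompact_iff_compactSpace.1 (isCompact_sphere 0 1)
  have := continuous_parametric_integral_of_continuous (μ := (volume : Measure E).toSphere)
    (f := fun (r : ℝ) (w : Metric.sphere (0:E) 1) => h (r • (w:E))) (by
      simp only [Function.uncurry_def]; fun_prop) isCompact_univ
  simpa using this

theorem divergence_ball (f : E → ℝ) (hf : ContDiff ℝ 1 f) (e : E) :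
    ∫ x in Metric.ball (0:E) 1, fderiv ℝ f x e =
      ∫ w : Metric.sphere (0:E) 1, f w * inner ℝ (w:E) e ∂(volume : Measure E).toSphere := by
  have hfc : Continuous f := hf.continuous
  have hf'c : Continuous (fun x => fderiv ℝ f x e) :=
    (hf.continuous_fderiv one_ne_zero).clm_apply continuous_const
  set n := Module.finrank ℝ E - 1 with hn
  set σ := (volume : Measure E).toSphere with hσ
  have hn' : ∀ (r : ℝ) (w : Metric.sphere (0:E) 1), ‖r • (w:E)‖^2 = r^2 := fun r w => by
    simp [norm_smul]
  have hbc : Continuous (fun r : ℝ => ∫ w : Metric.sphere (0:E) 1, f (r • (w:E)) * inner ℝ (w:E) e ∂σ) := by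
    have : CompactSpace (Metric.sphere (0:E) 1) := isCompact_iff_compactSpace.1 (isCompact_sphere 0 1)
    have := continuous_parametric_integral_of_continuous (μ := (volume : Measure E).toSphere)
      (f := fun (r : ℝ) (w : Metric.sphere (0:E) 1) => f (r • (w:E)) * inner ℝ (w:E) e) (by
        simp only [Function.uncurry_def]; fun_prop) isCompact_univ
    simpa using this
  have main := oneD
    (fun r => r ^ n * ∫ w : Metric.sphere (0:E) 1, fderiv ℝ f (r • (w:E)) e ∂σ)
    (fun r => r ^ n * ∫ w : Metric.sphere (0:E) 1, f (r • (w:E)) * inner ℝ (w:E) e ∂σ)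
    ((continuous_pow n).mul (sphere_cont _ hf'c)) ((continuous_pow n).mul hbc) ?_ 1 one_pos
  · rw [polar _ hf'c 1 one_pos, main]
    simp
  · intro R hR
    have := ibp f hf e R hR
    rw [polar _ (by fun_prop) R hR, polar _ (by fun_prop) R hR] at this
    simp only [hn', inner_smul_left, integral_const_mul] at this
    refine Eq.trans ?_ (this.trans ?_)
    · congr 1; ext r; ring
    · congr 2; ext r
      have : ∀ w : Metric.sphere (0:E) 1, f (r • (w:E)) * ((starRingEnd ℝ) r * inner ℝ (w:E) e) =
        r * (f (r • (w:E)) * inner ℝ (w:E) e) := fun w => by simp; ring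
      simp only [this, integral_const_mul]
      ring
end AuxE

theorem ballUniform_prob (d : ℕ) : IsProbabilityMeasure (ballUniform d) := by
  constructor
  have h0 : volume (Metric.closedBall (0 : EuclideanSpace ℝ (Fin d)) 1) ≠ 0 :=
    (Metric.measure_closedBall_pos _ _ one_pos).ne'
  have h1 : volume (Metric.closedBall (0 : EuclideanSpace ℝ (Fin d)) 1) ≠ ⊤ :=
    measure_closedBall_lt_top.ne
  simp only [ballUniform, Measure.smul_apply, Measure.restrict_apply_univ, smul_eq_mul]
  exact ENNReal.inv_mul_cancel h0 h1

theorem ballUniform_ae (d : ℕ) : ∀ᵐ v ∂(ballUniform d), ‖v‖ ≤ 1 := by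
  refine Measure.ae_smul_measure ?_ _
  filter_upwards [ae_restrict_mem measurableSet_closedBall] with v hv
  simpa using hv


/-- Smoothed-function gradient identity (part 1 of Lemma B.1): if `V` is `L`-smooth
then so is `V_μ`, and `∇V_μ(θ) = E_{v ∼ Unif(S^{d−1})}[(d/μ)(V(θ+μv) − V(θ)) v]`. -/
theorem smoothed_gradient_eq_sphere_integral
    (d : ℕ) (hd : 0 < d) (L μ : ℝ) (hL : 0 < L) (hμ : 0 < μ)
    (V : EuclideanSpace ℝ (Fin d) → ℝ)
    (hVdiff : Differentiable ℝ V)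
    (hVlip : LipschitzWith (Real.toNNReal L) (fun θ => gradient V θ)) :
    (Differentiable ℝ (smoothed d V μ) ∧
      LipschitzWith (Real.toNNReal L) (fun θ => gradient (smoothed d V μ) θ)) ∧
    ∀ θ : EuclideanSpace ℝ (Fin d),
      gradient (smoothed d V μ) θ =
        ∫ v, (((d : ℝ) / μ) * (V (θ + μ • v) - V θ)) • v ∂(sphereUniform d) := by
  have : Nonempty (Fin d) := ⟨⟨0, hd⟩⟩
  have hprob := ballUniform_prob d
  have hVc : Continuous V := hVdiff.continuous
  have hnd : ∀ x y, ‖fderiv ℝ V x - fderiv ℝ V y‖ ≤ L * ‖x - y‖ := by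
    intro x y
    have := hVlip.norm_sub_le x y
    simp only [gradient, ← map_sub, LinearIsometryEquiv.norm_map] at this
    rwa [Real.coe_toNNReal _ hL.le] at this
  have hV'c : Continuous (fderiv ℝ V) := by
    have : fderiv ℝ V = fun x => InnerProductSpace.toDual ℝ (EuclideanSpace ℝ (Fin d)) (gradient V x) := by
      ext1 x; simp [gradient]
    rw [this]
    exact (LinearIsometryEquiv.continuous _).comp hVlip.continuous
  have hV1 : ContDiff ℝ 1 V := contDiff_one_iff_fderiv.2 ⟨hVdiff, hV'c⟩
  have hint : ∀ (F : Type) [NormedAddCommGroup F] (g : EuclideanSpace ℝ (Fin d) → F) (hg : Continuous g),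
      Integrable g (ballUniform d) := by
    intro F _ g hg
    refine Integrable.smul_measure ?_ ?_
    · exact hg.continuousOn.integrableOn_compact (isCompact_closedBall 0 1)
    · exact ENNReal.inv_ne_top.2 (Metric.measure_closedBall_pos _ _ one_pos).ne'
  have hFD : ∀ θ, HasFDerivAt (smoothed d V μ) (∫ v, fderiv ℝ V (θ + μ • v) ∂(ballUniform d)) θ := by
    intro θ
    refine hasFDerivAt_integral_of_dominated_of_fderiv_le (𝕜 := ℝ)
      (F := fun θ v => V (θ + μ • v)) (F' := fun θ v => fderiv ℝ V (θ + μ • v))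
      (bound := fun _ => ‖fderiv ℝ V θ‖ + L * (1 + μ)) (Metric.ball_mem_nhds θ one_pos)
      (.of_forall fun x => ?_) (hint ℝ _ (by fun_prop)) ?_ ?_ (integrable_const _) ?_
    · exact (hint ℝ _ (by fun_prop)).aestronglyMeasurable
    · exact (hint _ _ (hV'c.comp (by fun_prop))).aestronglyMeasurable
    · filter_upwards [ballUniform_ae d] with v hv x hx
      have h1 := hnd (x + μ • v) θ
      have h2 : ‖x + μ • v - θ‖ ≤ 1 + μ := by
        have : x + μ • v - θ = (x - θ) + μ • v := by abel
        rw [this]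
        refine (norm_add_le _ _).trans ?_
        rw [norm_smul, Real.norm_of_nonneg hμ.le]
        rw [mem_ball_iff_norm] at hx
        have hv' : ‖v‖ ≤ 1 := hv
        nlinarith
      have h3 := norm_le_norm_add_norm_sub' (fderiv ℝ V (x + μ • v)) (fderiv ℝ V θ)
      nlinarith
    · refine .of_forall fun v x _ => ?_
      have := (hVdiff (x + μ • v)).hasFDerivAt.comp x ((hasFDerivAt_id x).add_const (μ • v))
      simpa [Function.comp_def] using this
  refine ⟨⟨fun θ => (hFD θ).differentiableAt, ?_⟩, fun θ => ?_⟩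
  · refine LipschitzWith.of_dist_le_mul fun x y => ?_
    rw [dist_eq_norm, dist_eq_norm, Real.coe_toNNReal _ hL.le]
    simp only [gradient, ← map_sub, LinearIsometryEquiv.norm_map]
    rw [(hFD x).fderiv, (hFD y).fderiv, ← integral_sub
      (hint _ (fun v => fderiv ℝ V (x + μ • v)) (hV'c.comp (by fun_prop)))
      (hint _ (fun v => fderiv ℝ V (y + μ • v)) (hV'c.comp (by fun_prop)))]
    refine (norm_integral_le_of_norm_le_const (C := L * ‖x - y‖) (.of_forall fun v => ?_)).trans ?_
    · simpa using hnd (x + μ • v) (y + μ • v)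
    · simp
  · refine ext_inner_right ℝ fun e => ?_
    have hsc : CompactSpace (Metric.sphere (0:EuclideanSpace ℝ (Fin d)) 1) :=
      isCompact_iff_compactSpace.1 (isCompact_sphere 0 1)
    have hemb : MeasurableEmbedding (Subtype.val : Metric.sphere (0:EuclideanSpace ℝ (Fin d)) 1 → EuclideanSpace ℝ (Fin d)) :=
      MeasurableEmbedding.subtype_coe (Metric.isClosed_sphere.measurableSet)
    have hdiv := divergence_ball (E := EuclideanSpace ℝ (Fin d)) (fun v => V (θ + μ • v) - V θ)
      ((hV1.comp (by fun_prop)).sub contDiff_const) e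
    have hfd : ∀ v : EuclideanSpace ℝ (Fin d), fderiv ℝ (fun v => V (θ + μ • v) - V θ) v e
        = μ * fderiv ℝ V (θ + μ • v) e := by
      intro v
      have h0 : HasFDerivAt (fun v : EuclideanSpace ℝ (Fin d) => θ + μ • v) (μ • ContinuousLinearMap.id ℝ (EuclideanSpace ℝ (Fin d))) v :=
        ((hasFDerivAt_id v).const_smul μ).const_add θ
      have := ((hVdiff (θ + μ • v)).hasFDerivAt.comp v h0).sub_const (V θ)
      have := this.fderiv
      simp only [Function.comp_def] at this
      rw [this]
      simp
    simp only [hfd, integral_const_mul] at hdiv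
    have lhs : inner ℝ (gradient (smoothed d V μ) θ) e =
        ((volume (Metric.ball (0:EuclideanSpace ℝ (Fin d)) 1)).toReal)⁻¹ *
          ∫ v in Metric.ball (0:EuclideanSpace ℝ (Fin d)) 1, fderiv ℝ V (θ + μ • v) e := by
      have hae : Metric.ball (0 : EuclideanSpace ℝ (Fin d)) 1 =ᵐ[volume] Metric.closedBall 0 1 :=
        ae_eq_of_subset_of_measure_ge Metric.ball_subset_closedBall
          (Measure.addHaar_closedBall_eq_addHaar_ball _ _ _).le
          measurableSet_ball.nullMeasurableSet measure_closedBall_lt_top.ne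
      simp only [gradient, InnerProductSpace.toDual_symm_apply]
      rw [(hFD θ).fderiv, ContinuousLinearMap.integral_apply
        (hint _ (fun v => fderiv ℝ V (θ + μ • v)) (hV'c.comp (by fun_prop)))]
      rw [ballUniform, integral_smul_measure, Measure.addHaar_closedBall_eq_addHaar_ball,
        setIntegral_congr_set hae.symm]
      simp
    have hsi : Integrable (fun v : EuclideanSpace ℝ (Fin d) => (((d : ℝ) / μ) * (V (θ + μ • v) - V θ)) • v)
        (sphereUniform d) := by
      refine Integrable.smul_measure ?_ ?_
      · rw [hemb.integrable_map_iff]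
        exact Continuous.integrable_of_hasCompactSupport (by fun_prop)
          (HasCompactSupport.of_compactSpace _)
      · refine ENNReal.inv_ne_top.2 ?_
        rw [Measure.toSphere_apply_univ]
        simp [hd.ne', (Metric.measure_ball_pos volume (0 : EuclideanSpace ℝ (Fin d)) one_pos).ne']
    have rhs : inner ℝ (∫ v, (((d : ℝ) / μ) * (V (θ + μ • v) - V θ)) • v ∂(sphereUniform d)) e =
        (d * (volume (Metric.ball (0:EuclideanSpace ℝ (Fin d)) 1)).toReal)⁻¹ * ((d / μ) *
          ∫ w : Metric.sphere (0:EuclideanSpace ℝ (Fin d)) 1, (V (θ + μ • (w:EuclideanSpace ℝ (Fin d))) - V θ) * inner ℝ (w:EuclideanSpace ℝ (Fin d)) e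
            ∂(volume : Measure (EuclideanSpace ℝ (Fin d))).toSphere) := by
      rw [real_inner_comm, ← integral_inner hsi, sphereUniform, integral_smul_measure,
        hemb.integral_map, ← integral_const_mul, Measure.toSphere_apply_univ]
      simp only [ENNReal.toReal_inv, ENNReal.toReal_mul, finrank_euclideanSpace, Fintype.card_fin,
        ENNReal.toReal_natCast, smul_eq_mul]
      congr 2
      ext w
      rw [real_inner_comm, real_inner_smul_left, mul_assoc]
    have hvol : (volume (Metric.ball (0:EuclideanSpace ℝ (Fin d)) 1)).toReal ≠ 0 :=
      (ENNReal.toReal_pos (Metric.measure_ball_pos _ _ one_pos).ne' measure_ball_lt_top.ne).ne'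
    have hd' : (d:ℝ) ≠ 0 := by exact_mod_cast hd.ne'
    rw [lhs, rhs, ← hdiv]
    field_simp
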